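/- Assume ℓ(C) = 0, i.e. e_j ≥ 2 for all j. If ℓ_1, ..., ℓ_{m−1} and ℓ are homogeneous linear forms in S (elements of S of degree 1, possibly zero) satisfying Σ_{j=1}^{m−1} ℓ_j ρ_j + ∇f × ∇ℓ = 0 in S³, then ℓ_1 = ⋯ = ℓ_{m−1} = 0 and ℓ = 0. (Here ∇f × ∇ℓ is the syzygy triple of the 2-form df ∧ dℓ; this is the key lemma showing that {ρ_1,...,ρ_{m−1}, σ^x, σ^y, σ^z} is a minimal generating set of D₀(f).) -/

import Mathlib

open MvPolynomial

noncomputable abbrev S : Type := MvPolynomial (Fin 3) ℂ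

/-- The gradient `∇g = (g_x, g_y, g_z)` of a polynomial `g ∈ S = ℂ[x,y,z]`. -/
noncomputable def grad (g : S) : Fin 3 → S := fun t => pderiv t g

/-- The syzygy triple `ρ_j = Σ_{i≠j} (∏_{k≠i,j} f_k) (∇f_i × ∇f_j)`
of the 2-form `ω_j = df ∧ df_j/f_j`. -/
noncomputable def rho {m : ℕ} (F : Fin m → S) (j : Fin m) : Fin 3 → S :=
  ∑ i ∈ Finset.univ.erase j,
    (∏ k ∈ (Finset.univ.erase j).erase i, F k) • crossProduct (grad (F i)) (grad (F j))

/-- The Jacobian syzygy module `D₀(f) = {(a,b,c) ∈ S³ : a f_x + b f_y + c f_z = 0}`. -/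
noncomputable def D0 (f : S) : Submodule S (Fin 3 → S) where
  carrier := {v | ∑ t, v t * pderiv t f = 0}
  add_mem' {a b} ha hb := by
    simp only [Set.mem_setOf_eq, Pi.add_apply, add_mul, Finset.sum_add_distrib] at *
    rw [ha, hb, add_zero]
  zero_mem' := by simp
  smul_mem' c v hv := by
    simp only [Set.mem_setOf_eq, Pi.smul_apply, smul_eq_mul, mul_assoc, ← Finset.mul_sum] at *
    rw [hv, mul_zero]

/-- The syzygy triple `σ^x = (0, f_z, −f_y)` of the 2-form `df ∧ dx`. -/
noncomputable def sigx (f : S) : Fin 3 → S := ![0, pderiv 2 f, -pderiv 1 f]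
/-- The syzygy triple `σ^y = (−f_z, 0, f_x)` of the 2-form `df ∧ dy`. -/
noncomputable def sigy (f : S) : Fin 3 → S := ![-pderiv 2 f, 0, pderiv 0 f]
/-- The syzygy triple `σ^z = (f_y, −f_x, 0)` of the 2-form `df ∧ dz`. -/
noncomputable def sigz (f : S) : Fin 3 → S := ![pderiv 1 f, -pderiv 0 f, 0]

/-!
Write `f = f_1 ⋯ f_m`. Multiplying the relation by `f` turns it into `∇f × w = 0`, where `w` is the
coefficient vector of the polynomial 1-form `f · (∑ ℓ_j df_j / f_j + dℓ)`. Contracting with the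
Euler field, which maps `df` to `d f` (`d = deg f`) and `w` to `f g` for an explicit polynomial `g`,
gives `d w = g ∇f`. On the other hand `w ≡ ℓ_i ∇f` modulo `f_i`, so `f_i` divides `(g - d ℓ_i) ∇f`.
In characteristic zero a divisor of a squarefree polynomial `f` is invisible to multiplication by
`∇f`, hence `f_i ∣ g - d ℓ_i`, and `g = d ℓ_i` for degree reasons. All `ℓ_i` are therefore equal,
which leaves `f ∇ℓ = 0`; the missing coefficient `ℓ_m = 0` makes them vanish.

The polynomial `f` is squarefree: by the Nullstellensatz a nonconstant common or repeated factor
would have a zero away from the origin, where the curves would meet with proportional gradients or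
be singular.
-/

lemma cross_eq_zero_iff_mul_comm {R : Type*} [CommRing R] (v w : Fin 3 → R) :
    crossProduct v w = 0 ↔ ∀ a b, w a * v b = w b * v a := by
  simp only [cross_apply, Matrix.cons_eq_zero_iff, Fin.forall_fin_succ, Fin.succ_zero_eq_one,
    Fin.succ_one_eq_two, IsEmpty.forall_iff, eq_iff_true_of_subsingleton, and_true,
    sub_eq_zero]
  grind

lemma derivation_prod {R A ι : Type*} [CommSemiring R] [CommSemiring A] [Algebra R A]
    [DecidableEq ι] (D : Derivation R A A) (F : ι → A) (s : Finset ι) :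
    D (∏ i ∈ s, F i) = ∑ i ∈ s, (∏ k ∈ s.erase i, F k) * D (F i) := by
  induction s using Finset.induction_on with
  | empty => simp
  | insert a s ha ih =>
    rw [Finset.prod_insert ha, D.leibniz, ih, Finset.sum_insert ha, Finset.erase_insert ha,
      add_comm, smul_eq_mul, smul_eq_mul, Finset.mul_sum]
    congr 1
    refine Finset.sum_congr rfl fun i hi => ?_
    have hai : a ≠ i := fun h => ha (h ▸ hi)
    rw [Finset.erase_insert_of_ne hai, Finset.prod_insert (by simp [ha]), mul_assoc]

section EulerOperator

variable {σ R : Type*}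

lemma coeff_X_mul_pderiv [CommSemiring R] (t : σ) (p : MvPolynomial σ R) (n : σ →₀ ℕ) :
    coeff n (X t * pderiv t p) = n t * coeff n p := by
  classical
  induction p using MvPolynomial.induction_on' with
  | monomial u a =>
    rw [X_mul_pderiv_monomial, coeff_smul, coeff_monomial]
    split_ifs with h
    · rw [h, nsmul_eq_mul]
    · simp
  | add p q hp hq => simp only [map_add, mul_add, coeff_add, hp, hq]

lemma totalDegree_X_mul_pderiv_le [CommSemiring R] (t : σ) (p : MvPolynomial σ R) :
    (X t * pderiv t p).totalDegree ≤ p.totalDegree := by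
  refine totalDegree_le_of_support_subset fun n hn => ?_
  rw [mem_support_iff, coeff_X_mul_pderiv] at hn
  exact mem_support_iff.2 (right_ne_zero_of_mul hn)

lemma pderiv_eq_zero_of_dvd_pderiv [CommRing R] [IsDomain R] {t : σ} {p : MvPolynomial σ R}
    (h : p ∣ pderiv t p) : pderiv t p = 0 := by
  by_contra hne
  have hle : p.totalDegree ≤ (pderiv t p).totalDegree := totalDegree_le_of_dvd_of_isDomain h hne
  have hEuler := totalDegree_X_mul_pderiv_le t p
  rw [totalDegree_mul_of_isDomain (X_ne_zero t) hne, totalDegree_X] at hEuler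
  lia

lemma eq_C_of_forall_pderiv_eq_zero [CommRing R] [IsDomain R] [CharZero R] {p : MvPolynomial σ R}
    (h : ∀ t, pderiv t p = 0) : p = C (coeff 0 p) := by
  classical
  ext n
  rw [coeff_C]
  split_ifs with hn
  · rw [hn]
  · obtain ⟨t, ht⟩ : ∃ t, n t ≠ 0 := by simpa [Finsupp.ext_iff, eq_comm] using hn
    have hcoeff := coeff_X_mul_pderiv t p n
    rw [h, mul_zero, coeff_zero] at hcoeff
    exact (mul_eq_zero.1 hcoeff.symm).resolve_left (Nat.cast_ne_zero.2 ht)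

lemma eq_zero_of_isHomogeneous_of_forall_pderiv_eq_zero [CommRing R] [IsDomain R] [CharZero R]
    {p : MvPolynomial σ R} {n : ℕ} (hp : p.IsHomogeneous n) (hn : n ≠ 0)
    (h : ∀ t, pderiv t p = 0) : p = 0 := by
  by_contra hne
  have hdeg := hp.totalDegree hne
  rw [eq_C_of_forall_pderiv_eq_zero h, totalDegree_C] at hdeg
  exact hn hdeg.symm

end EulerOperator

lemma dvd_of_squarefree_of_forall_dvd_mul_pderiv {σ K : Type*} [Field K] [CharZero K]
    {f g c : MvPolynomial σ K} (hf : Squarefree f) (hgf : g ∣ f)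
    (h : ∀ t, g ∣ c * pderiv t f) : g ∣ c := by
  have hg : g ≠ 0 := ne_zero_of_dvd_ne_zero hf.ne_zero hgf
  obtain ⟨g', c', a, hrel, rfl, rfl⟩ := UniqueFactorizationMonoid.exists_reduced_factors g hg c
  obtain ⟨s, hs⟩ : g' ∣ f := (dvd_mul_left g' a).trans hgf
  have hrel' : IsRelPrime g' s := IsRelPrime.of_squarefree_mul (hs ▸ hf)
  have hdvd (t : σ) : g' ∣ pderiv t g' := by
    have hcf := h t
    rw [mul_assoc, mul_dvd_mul_iff_left (left_ne_zero_of_mul hg)] at hcf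
    have hf' : g' ∣ pderiv t f := hrel.dvd_of_dvd_mul_left hcf
    rw [hs, pderiv_mul, dvd_add_left (dvd_mul_right _ _)] at hf'
    exact hrel'.dvd_of_dvd_mul_right hf'
  have hunit : IsUnit g' := by
    have hC := eq_C_of_forall_pderiv_eq_zero fun t => pderiv_eq_zero_of_dvd_pderiv (hdvd t)
    have hg' : g' ≠ 0 := right_ne_zero_of_mul hg
    rw [hC] at hg' ⊢
    exact (isUnit_iff_ne_zero.2 (C_ne_zero.1 hg')).map C
  exact mul_dvd_mul_left a hunit.dvd

section Nullstellensatz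

variable {σ K : Type*} [Finite σ] [Nontrivial σ] [Field K] [IsAlgClosed K]

lemma exists_ne_zero_eval_eq_zero {q : MvPolynomial σ K} (hq : ¬IsUnit q) :
    ∃ p : σ → K, p ≠ 0 ∧ eval p q = 0 := by
  by_contra! hzero
  have hX (i : σ) : ∃ n, q ∣ X i ^ n := by
    have hmem : (X i : MvPolynomial σ K) ∈ (Ideal.span {q}).radical := by
      rw [← vanishingIdeal_zeroLocus_eq_radical (K := K), mem_vanishingIdeal_iff]
      intro x hx
      have hx0 : x = 0 := by
        by_contra hne
        exact hzero x hne (mem_zeroLocus_iff.1 hx q (Ideal.mem_span_singleton_self q))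
      simp [hx0]
    obtain ⟨n, hn⟩ := hmem
    exact ⟨n, Ideal.mem_span_singleton.1 hn⟩
  obtain ⟨i, j, hij⟩ := exists_pair_ne σ
  obtain ⟨n, hn⟩ := hX i
  obtain ⟨k, hk⟩ := hX j
  have hrel : IsRelPrime (X i : MvPolynomial σ K) (X j) :=
    (X_prime (R := K)).irreducible.isRelPrime_iff_not_dvd.2 (mt X_dvd_X.1 hij)
  exact hq (hrel.pow hn hk)

lemma squarefree_of_smooth {f : MvPolynomial σ K}
    (hf : ∀ p : σ → K, eval p f = 0 → (∀ t, eval p (pderiv t f) = 0) → p = 0) :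
    Squarefree f := by
  rintro q ⟨r, rfl⟩
  by_contra hq
  obtain ⟨p, hp, hqp⟩ := exists_ne_zero_eval_eq_zero hq
  exact hp (hf p (by simp [hqp]) fun t => by simp [hqp])

lemma isRelPrime_of_linearIndependent_gradients {f g : MvPolynomial σ K}
    (h : ∀ p : σ → K, p ≠ 0 → eval p f = 0 → eval p g = 0 →
      LinearIndependent K ![fun t => eval p (pderiv t f), fun t => eval p (pderiv t g)]) :
    IsRelPrime f g := by
  rintro q ⟨a, rfl⟩ ⟨b, rfl⟩
  by_contra hq
  obtain ⟨p, hp, hqp⟩ := exists_ne_zero_eval_eq_zero hq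
  have hgrad (c : MvPolynomial σ K) :
      (fun t => eval p (pderiv t (q * c))) = eval p c • fun t => eval p (pderiv t q) := by
    funext t
    simp [hqp]
  have hlin := h p hp (by simp [hqp]) (by simp [hqp])
  rw [hgrad, hgrad] at hlin
  have hb : eval p b = 0 :=
    (LinearIndependent.pair_iff.1 hlin (eval p b) (-eval p a) (by module)).1
  exact hlin.ne_zero 1 (by simp [hb])

lemma squarefree_prod_of_smooth_of_normalCrossing {ι : Type*} [Fintype ι]
    {F : ι → MvPolynomial σ K}
    (hsmooth : ∀ j, ∀ p : σ → K, eval p (F j) = 0 →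
      (∀ t, eval p (pderiv t (F j)) = 0) → p = 0)
    (hnc : ∀ i j, i ≠ j → ∀ p : σ → K, p ≠ 0 → eval p (F i) = 0 → eval p (F j) = 0 →
      LinearIndependent K
        ![fun t => eval p (pderiv t (F i)), fun t => eval p (pderiv t (F j))]) :
    Squarefree (∏ i, F i) :=
  Finset.squarefree_prod_of_pairwise_isCoprime
    (fun i _ j _ hij => isRelPrime_of_linearIndependent_gradients (hnc i j hij))
    (fun j _ => squarefree_of_smooth (hsmooth j))

end Nullstellensatz

section LogForm

variable {σ ι R : Type*} [Fintype ι] [DecidableEq ι] [CommSemiring R]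

/-- The coefficients of the 1-form `f · (∑ M_j df_j / f_j + dl)` with `f = ∏ f_j`, a logarithmic
form cleared of its denominators. The quotient `f / f_j` is encoded as the product of the other
factors. -/
noncomputable def logForm (F M : ι → MvPolynomial σ R) (l : MvPolynomial σ R) (t : σ) :
    MvPolynomial σ R :=
  (∑ j, M j * ((∏ k ∈ Finset.univ.erase j, F k) * pderiv t (F j))) + (∏ j, F j) * pderiv t l

variable (F M : ι → MvPolynomial σ R) (l : MvPolynomial σ R)

lemma logForm_eq_of_forall_eq {h : MvPolynomial σ R} (hM : ∀ j, M j = h) (t : σ) :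
    logForm F M l t = h * pderiv t (∏ j, F j) + (∏ j, F j) * pderiv t l := by
  simp only [logForm, hM, derivation_prod, Finset.mul_sum]

lemma sum_X_mul_logForm [Fintype σ] {e : ι → ℕ} (hhom : ∀ j, (F j).IsHomogeneous (e j)) :
    ∑ t, X t * logForm F M l t =
      (∏ j, F j) * ((∑ j, (e j : MvPolynomial σ R) * M j) + ∑ t, X t * pderiv t l) := by
  have hterm (j : ι) :
      ∑ t, X t * (M j * ((∏ k ∈ Finset.univ.erase j, F k) * pderiv t (F j))) =
        (∏ k, F k) * (e j * M j) := by
    calc ∑ t, X t * (M j * ((∏ k ∈ Finset.univ.erase j, F k) * pderiv t (F j)))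
        = M j * (∏ k ∈ Finset.univ.erase j, F k) * ∑ t, X t * pderiv t (F j) := by
          rw [Finset.mul_sum]
          exact Finset.sum_congr rfl fun t _ => by ring
      _ = (∏ k, F k) * (e j * M j) := by
          rw [(hhom j).sum_X_mul_pderiv, ← Finset.mul_prod_erase _ F (Finset.mem_univ j),
            nsmul_eq_mul]
          ring
  simp only [logForm, mul_add, Finset.sum_add_distrib, Finset.mul_sum]
  rw [Finset.sum_comm]
  simp only [hterm, mul_left_comm (X _) (∏ j, F j)]

end LogForm

section Rigidity

variable {σ ι R : Type*} [Fintype ι] [DecidableEq ι] [CommRing R]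
  (F M : ι → MvPolynomial σ R) (l : MvPolynomial σ R)

lemma dvd_logForm_sub_mul_pderiv_prod (i : ι) (t : σ) :
    F i ∣ logForm F M l t - M i * pderiv t (∏ j, F j) := by
  rw [logForm, derivation_prod, Finset.mul_sum, add_sub_right_comm, ← Finset.sum_sub_distrib]
  refine dvd_add (Finset.dvd_sum fun j _ => ?_)
    ((Finset.dvd_prod_of_mem F (Finset.mem_univ i)).mul_right _)
  rcases eq_or_ne i j with rfl | hij
  · simp
  · have hdvd : F i ∣ ∏ k ∈ Finset.univ.erase j, F k := Finset.dvd_prod_of_mem F (by simp [hij])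
    exact dvd_sub ((hdvd.mul_right _).mul_left _) ((hdvd.mul_right _).mul_left _)

lemma mul_logForm_eq_of_mul_comm [Fintype σ] [IsDomain R] {e : ι → ℕ}
    (hhom : ∀ j, (F j).IsHomogeneous (e j)) (hF : ∏ j, F j ≠ 0)
    (hcomm : ∀ a b,
      logForm F M l a * pderiv b (∏ j, F j) = logForm F M l b * pderiv a (∏ j, F j)) (t : σ) :
    ((∑ j, e j : ℕ) : MvPolynomial σ R) * logForm F M l t =
      ((∑ j, (e j : MvPolynomial σ R) * M j) + ∑ s, X s * pderiv s l) *
        pderiv t (∏ j, F j) := by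
  have hEuler := (IsHomogeneous.prod Finset.univ F e fun j _ => hhom j).sum_X_mul_pderiv
  rw [nsmul_eq_mul] at hEuler
  refine mul_left_cancel₀ hF ?_
  calc (∏ j, F j) * (((∑ j, e j : ℕ) : MvPolynomial σ R) * logForm F M l t)
      = logForm F M l t * ∑ s, X s * pderiv s (∏ j, F j) := by rw [hEuler]; ring
    _ = (∑ s, X s * logForm F M l s) * pderiv t (∏ j, F j) := by
        rw [Finset.mul_sum, Finset.sum_mul]
        exact Finset.sum_congr rfl fun s _ => by linear_combination X s * hcomm t s
    _ = _ := by rw [sum_X_mul_logForm F M l hhom, mul_assoc]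

variable {K : Type*} [Field K] [CharZero K]

lemma eq_of_squarefree_of_mul_logForm_eq {F M : ι → MvPolynomial σ K} {g l : MvPolynomial σ K}
    {d r : ℕ} {i : ι} (hsq : Squarefree (∏ j, F j)) (hdeg : r < (F i).totalDegree)
    (hM : (M i).totalDegree ≤ r) (hg : g.totalDegree ≤ r)
    (h : ∀ t, (d : MvPolynomial σ K) * logForm F M l t = g * pderiv t (∏ j, F j)) :
    g = d * M i := by
  have hdvd : F i ∣ g - d * M i := by
    refine dvd_of_squarefree_of_forall_dvd_mul_pderiv hsq
      (Finset.dvd_prod_of_mem F (Finset.mem_univ i)) fun t => ?_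
    rw [sub_mul, ← h t, mul_assoc, ← mul_sub]
    exact (dvd_logForm_sub_mul_pderiv_prod F M l i t).mul_left _
  by_contra hne
  have hlower := totalDegree_le_of_dvd_of_isDomain hdvd (sub_ne_zero.2 hne)
  have hupper : (g - d * M i).totalDegree ≤ r := by
    rw [← nsmul_eq_mul]
    exact (totalDegree_sub _ _).trans (max_le hg ((totalDegree_smul_le _ _).trans hM))
  lia

theorem eq_and_pderiv_eq_zero_of_logForm_mul_comm [Finite σ] [Nonempty ι]
    {F M : ι → MvPolynomial σ K} {l : MvPolynomial σ K} {e : ι → ℕ} {r : ℕ}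
    (hhom : ∀ j, (F j).IsHomogeneous (e j)) (hsq : Squarefree (∏ j, F j)) (he : ∀ j, r < e j)
    (hM : ∀ j, (M j).totalDegree ≤ r) (hl : l.totalDegree ≤ r)
    (hcomm : ∀ a b,
      logForm F M l a * pderiv b (∏ j, F j) = logForm F M l b * pderiv a (∏ j, F j)) :
    (∀ i j, M i = M j) ∧ ∀ t, pderiv t l = 0 := by
  have := Fintype.ofFinite σ
  set d := ∑ j, e j
  set g := (∑ j, (e j : MvPolynomial σ K) * M j) + ∑ t, X t * pderiv t l
  have hF (j : ι) : F j ≠ 0 := Finset.prod_ne_zero_iff.1 hsq.ne_zero j (Finset.mem_univ j)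
  have hd : (d : MvPolynomial σ K) ≠ 0 :=
    Nat.cast_ne_zero.2 (Finset.sum_pos (fun j _ => (he j).pos) Finset.univ_nonempty).ne'
  have hw : ∀ t, (d : MvPolynomial σ K) * logForm F M l t = g * pderiv t (∏ j, F j) :=
    mul_logForm_eq_of_mul_comm F M l hhom hsq.ne_zero hcomm
  have hg : g.totalDegree ≤ r := by
    refine (totalDegree_add _ _).trans (max_le ?_ ?_) <;>
      refine totalDegree_finsetSum_le fun j _ => ?_
    · rw [← nsmul_eq_mul]
      exact (totalDegree_smul_le _ _).trans (hM j)
    · exact (totalDegree_X_mul_pderiv_le j l).trans hl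
  have hgM (i : ι) : g = d * M i :=
    eq_of_squarefree_of_mul_logForm_eq hsq ((he i).trans_eq ((hhom i).totalDegree (hF i)).symm)
      (hM i) hg hw
  have hMM (i j : ι) : M i = M j := mul_left_cancel₀ hd ((hgM i).symm.trans (hgM j))
  refine ⟨hMM, fun t => ?_⟩
  obtain ⟨i⟩ := ‹Nonempty ι›
  have hzero : (d : MvPolynomial σ K) * ((∏ j, F j) * pderiv t l) = 0 := by
    linear_combination hw t + pderiv t (∏ j, F j) * hgM i -
      d * logForm_eq_of_forall_eq F M l (hMM · i) t
  exact (mul_eq_zero.1 ((mul_eq_zero.1 hzero).resolve_left hd)).resolve_left hsq.ne_zero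

end Rigidity

section Syzygies

variable {m : ℕ} (F : Fin m → S)

lemma grad_prod : grad (∏ i, F i) = ∑ i, (∏ k ∈ Finset.univ.erase i, F k) • grad (F i) := by
  funext t
  simp only [grad, derivation_prod, Finset.sum_apply, Pi.smul_apply, smul_eq_mul]

lemma prod_smul_rho (j : Fin m) :
    (∏ i, F i) • rho F j =
      crossProduct (grad (∏ i, F i)) ((∏ k ∈ Finset.univ.erase j, F k) • grad (F j)) := by
  rw [grad_prod, rho, Finset.smul_sum, map_sum, LinearMap.sum_apply,
    ← Finset.add_sum_erase _ _ (Finset.mem_univ j)]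
  simp only [map_smul, LinearMap.smul_apply, cross_self, smul_zero, zero_add, smul_smul]
  refine Finset.sum_congr rfl fun i hi => ?_
  have hji : j ∈ Finset.univ.erase i := by simpa using (Finset.ne_of_mem_erase hi).symm
  congr 1
  rw [← Finset.mul_prod_erase _ F (Finset.mem_univ i), ← Finset.mul_prod_erase _ F hji,
    ← Finset.mul_prod_erase _ F hi, Finset.erase_right_comm]
  ring

lemma prod_smul_sum_smul_rho_add (M : Fin m → S) (l : S) :
    (∏ i, F i) • ((∑ j, M j • rho F j) + crossProduct (grad (∏ i, F i)) (grad l)) =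
      crossProduct (grad (∏ i, F i)) (logForm F M l) := by
  have hlog : logForm F M l =
      (∑ j, M j • (∏ k ∈ Finset.univ.erase j, F k) • grad (F j)) + (∏ i, F i) • grad l := by
    funext t
    simp only [logForm, grad, Pi.add_apply, Finset.sum_apply, Pi.smul_apply, smul_eq_mul]
  simp only [hlog, smul_add, Finset.smul_sum, map_add, map_sum, map_smul,
    smul_comm (∏ i, F i) (M _), prod_smul_rho]

end Syzygies

theorem eq_and_grad_eq_zero_of_sum_smul_rho_add_eq_zero {m r : ℕ} [NeZero m] {F M : Fin m → S}
    {l : S} {e : Fin m → ℕ} (hhom : ∀ j, (F j).IsHomogeneous (e j))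
    (hsq : Squarefree (∏ i, F i)) (he : ∀ j, r < e j)
    (hM : ∀ j, (M j).totalDegree ≤ r) (hl : l.totalDegree ≤ r)
    (heq : (∑ j, M j • rho F j) + crossProduct (grad (∏ i, F i)) (grad l) = 0) :
    (∀ i j, M i = M j) ∧ grad l = 0 := by
  have hcross : crossProduct (grad (∏ i, F i)) (logForm F M l) = 0 := by
    rw [← prod_smul_sum_smul_rho_add, heq, smul_zero]
  obtain ⟨hMM, hgrad⟩ := eq_and_pderiv_eq_zero_of_logForm_mul_comm hhom hsq he hM hl
    ((cross_eq_zero_iff_mul_comm _ _).1 hcross)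
  exact ⟨hMM, funext hgrad⟩

theorem key_lemma_caseL0_general
    (m r : ℕ) (hm : m ≠ 0) (F : Fin m → S) (e : Fin m → ℕ)
    (hhom : ∀ j, (F j).IsHomogeneous (e j))
    (hsq : Squarefree (∏ i, F i))
    (he : ∀ j, r < e j)
    (L : Fin (m - 1) → S) (l : S)
    (hL : ∀ j, (L j).totalDegree ≤ r) (hl : l.totalDegree ≤ r)
    (heq : (∑ j : Fin (m - 1), L j • rho F (Fin.castLE (Nat.sub_le m 1) j))
        + crossProduct (grad (∏ i, F i)) (grad l) = 0) :
    (∀ j, L j = 0) ∧ grad l = 0 := by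
  obtain ⟨n, rfl⟩ := Nat.exists_eq_succ_of_ne_zero hm
  let M : Fin (n + 1) → S := Fin.snoc (α := fun _ => S) L 0
  have hM (j : Fin (n + 1)) : (M j).totalDegree ≤ r := by
    induction j using Fin.lastCases with
    | last => simp [M]
    | cast j => simpa [M] using hL j
  have hrel : (∑ j, M j • rho F j) + crossProduct (grad (∏ i, F i)) (grad l) = 0 := by
    simp only [M, Fin.sum_univ_castSucc, Fin.snoc_castSucc, Fin.snoc_last, zero_smul, add_zero]
    exact heq
  obtain ⟨hMM, hgrad⟩ := eq_and_grad_eq_zero_of_sum_smul_rho_add_eq_zero hhom hsq he hM hl hrel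
  refine ⟨fun j => ?_, hgrad⟩
  simpa [M] using hMM (Fin.castSucc j) (Fin.last n)

/-- if `ℓ(C) = 0` (all `e_j ≥ 2`) and `ℓ_1, …, ℓ_{m−1}, ℓ` are homogeneous
linear forms (possibly zero) with `Σ_{j=1}^{m−1} ℓ_j ρ_j + ∇f × ∇ℓ = 0` in `S³`, then all
`ℓ_j = 0` and `ℓ = 0`. -/
theorem key_lemma_caseL0
    (m : ℕ) (hm : 4 ≤ m) (F : Fin m → S) (e : Fin m → ℕ)
    (he : ∀ j, 1 ≤ e j)
    (hhom : ∀ j, (F j).IsHomogeneous (e j))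
    (hsmooth : ∀ j, ∀ p : Fin 3 → ℂ,
      (∀ t, eval p (pderiv t (F j)) = 0) → p = 0)
    (hnc : ∀ i j : Fin m, i ≠ j → ∀ p : Fin 3 → ℂ, p ≠ 0 →
      eval p (F i) = 0 → eval p (F j) = 0 →
      LinearIndependent ℂ
        ![fun t => eval p (pderiv t (F i)), fun t => eval p (pderiv t (F j))])
    (htriple : ∀ i j k : Fin m, i ≠ j → i ≠ k → j ≠ k → ∀ p : Fin 3 → ℂ, p ≠ 0 →
      ¬(eval p (F i) = 0 ∧ eval p (F j) = 0 ∧ eval p (F k) = 0))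
    (hl0 : ∀ j, 2 ≤ e j)
    (L : Fin (m - 1) → S) (l : S)
    (hL : ∀ j, (L j).IsHomogeneous 1) (hl : l.IsHomogeneous 1)
    (heq : (∑ j : Fin (m - 1), L j • rho F (Fin.castLE (Nat.sub_le m 1) j))
        + crossProduct (grad (∏ i, F i)) (grad l) = 0) :
    (∀ j, L j = 0) ∧ l = 0 := by
  have hsq : Squarefree (∏ i, F i) :=
    squarefree_prod_of_smooth_of_normalCrossing (fun j p _ => hsmooth j p) hnc
  obtain ⟨hL0, hgrad⟩ := key_lemma_caseL0_general m 1 (by lia) F e hhom hsq hl0 L l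
    (fun j => (hL j).totalDegree_le) hl.totalDegree_le heq
  exact ⟨hL0, eq_zero_of_isHomogeneous_of_forall_pderiv_eq_zero hl one_ne_zero (congrFun hgrad)⟩
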